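/- Let T be a triangulation of an unpunctured disc with N marked points, and let n_{ij} denote the number of matchings between T and all vertices except i and j. If i and j are joined by an arc of T, or if j = i+1 (neighbours on the boundary), then n_{ij} = 1. -/

import Mathlib

noncomputable section
open scoped Classical

namespace Frieze

/-- Vertices of the disc with `N` marked points, labelled clockwise. -/
abbrev Vx (N : ℕ) := ZMod N

/-- `Btw a x b` : `x` lies strictly between `a` and `b`, going clockwise. -/
def Btw {N : ℕ} (a x b : Vx N) : Prop :=
  0 < (x - a).val ∧ (x - a).val < (b - a).val

/-- A valid diagonal (arc) of the unpunctured disc: endpoints distinct and non-adjacent. -/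
def IsDiag (N : ℕ) (p : Vx N × Vx N) : Prop :=
  p.2 ≠ p.1 ∧ p.2 ≠ p.1 + 1 ∧ p.1 ≠ p.2 + 1

/-- Two chords cross iff their endpoints strictly interleave in the cyclic order. -/
def DCross {N : ℕ} (p q : Vx N × Vx N) : Prop :=
  (Btw p.1 q.1 p.2 ∧ Btw p.2 q.2 p.1) ∨ (Btw p.1 q.2 p.2 ∧ Btw p.2 q.1 p.1)

/-- A triangulation of the unpunctured disc with `N` marked points:
a maximal collection of pairwise noncrossing diagonals (each recorded once). -/
structure Triang (N : ℕ) where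
  diag : Finset (Vx N × Vx N)
  valid : ∀ p ∈ diag, IsDiag N p
  nodupSym : ∀ p ∈ diag, (p.2, p.1) ∉ diag
  noncross : ∀ p ∈ diag, ∀ q ∈ diag, ¬ DCross p q
  maximal : ∀ p, IsDiag N p → (∀ q ∈ diag, ¬ DCross p q) → p ∈ diag ∨ (p.2, p.1) ∈ diag

/-- The unordered diagonal `{a,b}` belongs to `T`. -/
def MemD {N : ℕ} (T : Triang N) (a b : Vx N) : Prop :=
  (a, b) ∈ T.diag ∨ (b, a) ∈ T.diag

/-- The segment from `a` to `a + d` (going `d` steps clockwise) can be a side of a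
triangle: it is a boundary edge (`d = 1`) or a diagonal of `T`. -/
def USide {N : ℕ} (T : Triang N) (a : Vx N) (d : ℕ) : Prop :=
  d = 1 ∨ MemD T a (a + (d : Vx N))

/-- `(a, p, q)` encodes the triangle with vertices `a`, `a+p`, `a+p+q` (clockwise);
the canonicity condition (`a` carries the smallest label) makes each triangle of
the triangulation be recorded exactly once. -/
def IsUTri {N : ℕ} (T : Triang N) (t : Vx N × ℕ × ℕ) : Prop :=
  1 ≤ t.2.1 ∧ 1 ≤ t.2.2 ∧ t.2.1 + t.2.2 ≤ N - 1 ∧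
  USide T t.1 t.2.1 ∧ USide T (t.1 + (t.2.1 : Vx N)) t.2.2 ∧
  USide T (t.1 + ((t.2.1 + t.2.2 : ℕ) : Vx N)) (N - t.2.1 - t.2.2) ∧
  t.1.val < (t.1 + (t.2.1 : Vx N)).val ∧ t.1.val < (t.1 + ((t.2.1 + t.2.2 : ℕ) : Vx N)).val

/-- Incidence of a vertex with a triangle. -/
def UInc {N : ℕ} (v : Vx N) (t : Vx N × ℕ × ℕ) : Prop :=
  v = t.1 ∨ v = t.1 + (t.2.1 : Vx N) ∨ v = t.1 + ((t.2.1 + t.2.2 : ℕ) : Vx N)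

/-- The number of matchings between the vertex set `I` and those triangles of `T`
lying in `S` : injective allocations, to each vertex of `I`, of an incident triangle. -/
def UMatchIn {N : ℕ} (T : Triang N) (I : Finset (Vx N)) (S : Set (Vx N × ℕ × ℕ)) : ℕ :=
  Set.ncard {f : I → Vx N × ℕ × ℕ | Function.Injective f ∧
    ∀ v : I, IsUTri T (f v) ∧ f v ∈ S ∧ UInc v.1 (f v)}

/-- The number of matchings between the vertex set `I` and the triangulation `T`. -/
def UMatch {N : ℕ} (T : Triang N) (I : Finset (Vx N)) : ℕ :=
  UMatchIn T I Set.univ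

/-- `n_{ij}` : the number of matchings between `T` and all marked points except `i, j`. -/
def nMatch {N : ℕ} [NeZero N] (T : Triang N) (i j : Vx N) : ℕ :=
  UMatch T (Finset.univ \ {i, j})

/-- `i` and `j` are joined by an edge of the triangulated polygon
(a boundary edge or a diagonal of `T`). -/
def Joined {N : ℕ} (T : Triang N) (i j : Vx N) : Prop :=
  j = i + 1 ∨ i = j + 1 ∨ MemD T i j

/-- `x` lies in the closed clockwise arc from `a` to `b`. -/
def InCWArc {N : ℕ} (a x b : Vx N) : Prop := x = a ∨ x = b ∨ Btw a x b

/-- `ℓ` is the Conway–Coxeter labelling of the vertices based at `i` : the vertex `i`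
is labelled `0`, every vertex joined to `i` by an edge (of `T`, or a boundary edge)
is labelled `1`, and in each triangle the vertex on the far side from `i` is labelled
by the sum of the labels of the other two vertices.  The label `ℓ j` is then the
Conway–Coxeter frieze entry `(i,j)`. -/
def IsCCLabel {N : ℕ} (T : Triang N) (i : Vx N) (ℓ : Vx N → ℕ) : Prop :=
  ℓ i = 0 ∧ (∀ j, Joined T i j → ℓ j = 1) ∧
  ∀ a p q, IsUTri T (a, p, q) →
    (InCWArc (a + ((p + q : ℕ) : Vx N)) i a →
      ℓ (a + (p : Vx N)) = ℓ a + ℓ (a + ((p + q : ℕ) : Vx N))) ∧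
    (InCWArc a i (a + (p : Vx N)) →
      ℓ (a + ((p + q : ℕ) : Vx N)) = ℓ a + ℓ (a + (p : Vx N))) ∧
    (InCWArc (a + (p : Vx N)) i (a + ((p + q : ℕ) : Vx N)) →
      ℓ a = ℓ (a + (p : Vx N)) + ℓ (a + ((p + q : ℕ) : Vx N)))

def D {N : ℕ} (a x : Vx N) : ℕ := (x - a).val

theorem D_lt {N : ℕ} [NeZero N] (a x : Vx N) : D a x < N := ZMod.val_lt _

theorem D_coc {N : ℕ} [NeZero N] (o x y : Vx N) :
    D o x + D x y = D o y ∨ D o x + D x y = D o y + N := by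
  have h : D o y = (D o x + D x y) % N := by
    unfold D
    rw [← ZMod.val_add]
    congr 1
    ring
  have h1 := D_lt o x
  have h2 := D_lt x y
  rcases lt_or_ge (D o x + D x y) N with h3 | h3
  · rw [Nat.mod_eq_of_lt h3] at h
    omega
  · rw [Nat.mod_eq_sub_mod h3, Nat.mod_eq_of_lt (by omega)] at h
    omega

theorem D_self {N : ℕ} (a : Vx N) : D a a = 0 := by simp [D]

theorem D_zero {N : ℕ} {a b : Vx N} : D a b = 0 ↔ b = a := by
  simp [D, ZMod.val_eq_zero, sub_eq_zero]

theorem D_inj {N : ℕ} [NeZero N] {o a b : Vx N} (h : D o a = D o b) : a = b := by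
  have := ZMod.val_injective N h
  simpa using this

theorem D_add {N : ℕ} [NeZero N] (a b : Vx N) : a + ((D a b : ℕ) : Vx N) = b := by
  simp [D]

theorem D_nat {N : ℕ} [NeZero N] (a : Vx N) (k : ℕ) (h : k < N) : D a (a + (k : Vx N)) = k := by
  simp [D, ZMod.val_natCast, Nat.mod_eq_of_lt h]

theorem D_one {N : ℕ} [NeZero N] (hN : 3 ≤ N) (a b : Vx N) : D a b = 1 ↔ b = a + 1 := by
  constructor
  · intro h
    have := D_add a b
    rw [h] at this
    simpa using this.symm
  · rintro rfl
    simpa using D_nat a 1 (by omega)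

theorem Btw_iff {N : ℕ} (a x b : Vx N) : Btw a x b ↔ 0 < D a x ∧ D a x < D a b := Iff.rfl

theorem J_iff {N : ℕ} [NeZero N] (hN : 3 ≤ N) (T : Triang N) (a b : Vx N) :
    Joined T a b ↔ D a b = 1 ∨ D b a = 1 ∨ MemD T a b := by
  rw [D_one hN, D_one hN]; rfl

theorem MemD_symm {N : ℕ} {T : Triang N} {a b : Vx N} (h : MemD T a b) : MemD T b a := Or.symm h

theorem J_symm {N : ℕ} {T : Triang N} {a b : Vx N} (h : Joined T a b) : Joined T b a := by
  rcases h with h | h | h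
  · exact Or.inr (Or.inl h)
  · exact Or.inl h
  · exact Or.inr (Or.inr (MemD_symm h))

theorem MemD_len {N : ℕ} [NeZero N] (hN : 3 ≤ N) {T : Triang N} {a b : Vx N} (h : MemD T a b) :
    D a b ≠ 0 ∧ D a b ≠ 1 ∧ D b a ≠ 1 := by
  rw [Ne, Ne, Ne, D_zero, D_one hN, D_one hN]
  rcases h with h | h
  · exact T.valid _ h
  · obtain ⟨h1, h2, h3⟩ := T.valid _ h
    exact ⟨fun e => h1 e.symm, h3, h2⟩

theorem J_ne {N : ℕ} [NeZero N] (hN : 3 ≤ N) {T : Triang N} {a b : Vx N} (h : Joined T a b) :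
    D a b ≠ 0 := by
  have h1 := D_coc a b a
  have h2 := D_self a
  rcases (J_iff hN T a b).1 h with h | h | h
  · omega
  · omega
  · exact (MemD_len hN h).1

theorem MemD_nc {N : ℕ} {T : Triang N} {x z y w : Vx N} (h : MemD T x z) (h' : MemD T y w) :
    ¬ (Btw x y z ∧ Btw z w x) := by
  rintro ⟨h1, h2⟩
  rcases h with h | h <;> rcases h' with h' | h'
  · exact T.noncross _ h _ h' (Or.inl ⟨h1, h2⟩)
  · exact T.noncross _ h _ h' (Or.inr ⟨h1, h2⟩)
  · exact T.noncross _ h _ h' (Or.inr ⟨h2, h1⟩)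
  · exact T.noncross _ h _ h' (Or.inl ⟨h2, h1⟩)

theorem J_nc {N : ℕ} [NeZero N] (hN : 3 ≤ N) {T : Triang N} {x z y w : Vx N}
    (h : Joined T x z) (h' : Joined T y w) (h1 : 0 < D x y) (h2 : D x y < D x z)
    (h3 : D x z < D x w) : False := by
  have a1 := D_coc x z w
  have a2 := D_coc x z x
  have a3 := D_coc x y w
  have a4 := D_coc x w y
  have a0 := D_self x
  have b1 := D_lt x w
  have b2 := D_lt z w
  have b3 := D_lt z x
  have b4 := D_lt y w
  have b5 := D_lt w y
  rcases (J_iff hN T _ _).1 h with h | h | h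
  · omega
  · omega
  rcases (J_iff hN T _ _).1 h' with h' | h' | h'
  · omega
  · omega
  refine MemD_nc h h' ⟨⟨h1, h2⟩, ?_⟩
  rw [Btw_iff]
  omega

theorem J_max {N : ℕ} [NeZero N] (hN : 3 ≤ N) {T : Triang N} {x z : Vx N} (hxz : D x z ≠ 0)
    (h : ∀ y w, Joined T y w → 0 < D x y → D x y < D x z → D x z < D x w → False) :
    Joined T x z := by
  rw [J_iff hN]
  by_cases h1 : D x z = 1
  · exact Or.inl h1
  by_cases h2 : D z x = 1
  · exact Or.inr (Or.inl h2)
  refine Or.inr (Or.inr ?_)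
  refine T.maximal (x, z) ⟨?_, ?_, ?_⟩ ?_
  · rwa [Ne, D_zero] at hxz
  · rwa [D_one hN] at h1
  · rwa [D_one hN] at h2
  have key : ∀ y w, Joined T y w → Btw x y z → Btw z w x → False := by
    intro y w hj hb hb'
    rw [Btw_iff] at hb hb'
    have a1 := D_coc x z w
    have a2 := D_coc x z x
    have a0 := D_self x
    have b1 := D_lt x w
    have b2 := D_lt z w
    have b3 := D_lt z x
    exact h y w hj hb.1 hb.2 (by omega)
  intro q hq hc
  rcases hc with hc | hc
  · exact key _ _ (Or.inr (Or.inr (Or.inl hq))) hc.1 hc.2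
  · exact key _ _ (Or.inr (Or.inr (Or.inr hq))) hc.1 hc.2

theorem J_one {N : ℕ} [NeZero N] (hN : 3 ≤ N) (T : Triang N) (v : Vx N) :
    ∃ x, Joined T v x ∧ D v x = 1 :=
  ⟨v + 1, Or.inl rfl, (D_one hN _ _).2 rfl⟩

theorem J_last {N : ℕ} [NeZero N] (hN : 3 ≤ N) (T : Triang N) (v : Vx N) :
    ∃ x, Joined T v x ∧ D v x = N - 1 := by
  refine ⟨v - 1, Or.inr (Or.inl (by ring)), ?_⟩
  have h1 : D (v - 1) v = 1 := (D_one hN _ _).2 (by ring)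
  have a1 := D_coc v (v - 1) v
  have a0 := D_self v
  have := D_lt v (v-1)
  omega

/-- The triangle `v, x, y` at `v` whose sector contains the chord `i j`. -/
def PT {N : ℕ} (T : Triang N) (i j v x y : Vx N) : Prop :=
  Joined T v x ∧ Joined T v y ∧ Joined T x y ∧ D v x ≤ D v i ∧ D v x ≤ D v j ∧
    D v i ≤ D v y ∧ D v j ≤ D v y

theorem PT_exists {N : ℕ} [NeZero N] (hN : 3 ≤ N) (T : Triang N) {i j v : Vx N}
    (hij : Joined T i j) (hi : v ≠ i) (hj : v ≠ j) : ∃ x y, PT T i j v x y := by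
  have i0 : D v i ≠ 0 := fun h => hi (D_zero.1 h).symm
  have j0 : D v j ≠ 0 := fun h => hj (D_zero.1 h).symm
  have iN := D_lt v i
  have jN := D_lt v j
  obtain ⟨x1, hx1, hx1'⟩ := J_one hN T v
  obtain ⟨y1, hy1, hy1'⟩ := J_last hN T v
  obtain ⟨x, hx, hxm⟩ := Finset.exists_max_image
    (Finset.univ.filter fun x => Joined T v x ∧ D v x ≤ D v i ∧ D v x ≤ D v j) (D v)
    ⟨x1, by simp [hx1]; omega⟩
  obtain ⟨y, hy, hym⟩ := Finset.exists_min_image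
    (Finset.univ.filter fun x => Joined T v x ∧ D v i ≤ D v x ∧ D v j ≤ D v x) (D v)
    ⟨y1, by simp [hy1]; omega⟩
  simp only [Finset.mem_filter, Finset.mem_univ, true_and] at hx hxm hy hym
  have hne := J_ne hN hij
  have c1 := D_coc v i j
  have c2 := D_lt i j
  have x0 := J_ne hN hx.1
  have yN := D_lt v y
  refine ⟨x, y, hx.1, hy.1, ?_, hx.2.1, hx.2.2, hy.2.1, hy.2.2⟩
  have e1 := D_coc v x y
  have e2 := D_lt x y
  have e3 := D_lt v x
  refine J_max hN (by omega) ?_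
  intro u w huw h1 h2 h3
  have f1 := D_coc v x u
  have f2 := D_coc v x w
  have f3 := D_lt v u
  have f4 := D_lt v w
  have f5 := D_lt x w
  by_cases hw : D v w = 0
  · rw [D_zero] at hw
    subst hw
    have g1 := hxm u
    have g2 := hym u
    have huw' := J_symm huw
    have g3 : ¬ (D w u ≤ D w i ∧ D w u ≤ D w j) := fun h => by
      have := g1 ⟨huw', h⟩
      omega
    have g4 : ¬ (D w i ≤ D w u ∧ D w j ≤ D w u) := fun h => by
      have := g2 ⟨huw', h⟩
      omega
    rcases lt_or_ge (D w i) (D w j) with h | h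
    · exact J_nc hN huw' hij (by omega) (by omega) (by omega)
    · exact J_nc hN huw' (J_symm hij) (by omega) (by omega) (by omega)
  · rcases lt_or_ge (D v w) (D v x) with h | h
    · exact J_nc hN hx.1 (J_symm huw) (by omega) (by omega) (by omega)
    · exact J_nc hN hy.1 huw (by omega) (by omega) (by omega)

theorem PT_rank {N : ℕ} [NeZero N] (hN : 3 ≤ N) {T : Triang N} {i j v x y w x' y' : Vx N}
    (hij : Joined T i j) (hi : w ≠ i) (hj : w ≠ j) (h : PT T i j v x y) (h' : PT T i j w x' y')
    (hw : w = x ∨ w = y) : D x' y' < D x y := by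
  obtain ⟨p1, p2, p3, p4, p5, p6, p7⟩ := h
  obtain ⟨q1, q2, q3, q4, q5, q6, q7⟩ := h'
  have i0 : D w i ≠ 0 := fun h => hi (D_zero.1 h).symm
  have j0 : D w j ≠ 0 := fun h => hj (D_zero.1 h).symm
  have n1 := J_ne hN p1
  have n2 := J_ne hN p2
  have n3 := J_ne hN p3
  have n4 := J_ne hN q1
  have n5 := J_ne hN q2
  have n6 := J_ne hN q3
  have hne := J_ne hN hij
  have s1 := D_self w
  have s2 := D_coc v w i
  have s3 := D_coc v w j
  have s4 := D_coc v x y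
  have s5 := D_coc w x' y'
  have s6 := D_coc w i j
  have t1 := D_lt w i
  have t2 := D_lt w j
  have t3 := D_lt w y'
  have t4 := D_lt v y
  have t5 := D_lt x' y'
  have t6 := D_lt x y
  have t7 := D_lt i j
  have t8 := D_lt v i
  have t9 := D_lt v j
  rcases hw with rfl | rfl
  · by_contra hc
    exact J_nc hN p3 q3 (by omega) (by omega) (by omega)
  · have s7 := D_coc w x w
    have s8 := D_coc v w x
    have t10 := D_lt w x
    by_contra hc
    exact J_nc hN (J_symm p3) q3 (by omega) (by omega) (by omega)

theorem PT_cover {N : ℕ} [NeZero N] (hN : 3 ≤ N) {T : Triang N} {i j a b c : Vx N}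
    (hij : Joined T i j) (hab : Joined T a b) (hbc : Joined T b c) (hac : Joined T a c)
    (hlt : D a b < D a c) :
    PT T i j a b c ∨ PT T i j b c a ∨ PT T i j c a b := by
  have n1 := J_ne hN hab
  have n2 := J_ne hN hbc
  have n3 := J_ne hN hac
  have hne := J_ne hN hij
  have hji := J_symm hij
  have u1 : ¬ (0 < D a i ∧ D a i < D a b ∧ D a b < D a j) := fun h => J_nc hN hab hij h.1 h.2.1 h.2.2
  have u2 : ¬ (0 < D a j ∧ D a j < D a b ∧ D a b < D a i) := fun h => J_nc hN hab hji h.1 h.2.1 h.2.2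
  have u3 : ¬ (0 < D b i ∧ D b i < D b c ∧ D b c < D b j) := fun h => J_nc hN hbc hij h.1 h.2.1 h.2.2
  have u4 : ¬ (0 < D b j ∧ D b j < D b c ∧ D b c < D b i) := fun h => J_nc hN hbc hji h.1 h.2.1 h.2.2
  have u5 : ¬ (0 < D a i ∧ D a i < D a c ∧ D a c < D a j) := fun h => J_nc hN hac hij h.1 h.2.1 h.2.2
  have u6 : ¬ (0 < D a j ∧ D a j < D a c ∧ D a c < D a i) := fun h => J_nc hN hac hji h.1 h.2.1 h.2.2
  have s0 := D_self a
  have s1 := D_coc a b i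
  have s2 := D_coc a b j
  have s3 := D_coc a b c
  have s4 := D_coc a b a
  have s5 := D_coc a c i
  have s6 := D_coc a c j
  have s7 := D_coc a c a
  have s8 := D_coc a c b
  have s9 := D_coc a i j
  have t1 := D_lt a i
  have t2 := D_lt a j
  have t3 := D_lt a c
  have t4 := D_lt b i
  have t5 := D_lt b j
  have t6 := D_lt b c
  have t7 := D_lt b a
  have t8 := D_lt c i
  have t9 := D_lt c j
  have t10 := D_lt c a
  have t11 := D_lt c b
  have t12 := D_lt i j
  by_cases h1 : D a b ≤ D a i ∧ D a b ≤ D a j ∧ D a i ≤ D a c ∧ D a j ≤ D a c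
  · exact Or.inl ⟨hab, hac, hbc, h1⟩
  by_cases h2 : D a i ≤ D a b ∧ D a j ≤ D a b
  · clear u1 u2 u3 u4 u5 u6 s1 s2 s9
    exact Or.inr (Or.inr ⟨J_symm hac, J_symm hbc, hab, by omega, by omega, by omega, by omega⟩)
  · have v1 : D a i = 0 ∨ D a c ≤ D a i := by
      clear s4 s5 s6 s7 s8
      omega
    have v2 : D a j = 0 ∨ D a c ≤ D a j := by
      clear s4 s5 s6 s7 s8
      omega
    clear u1 u2 u3 u4 u5 u6 s5 s6 s7 s8 s9 h1 h2
    exact Or.inr (Or.inl ⟨hbc, J_symm hab, J_symm hac, by omega, by omega, by omega, by omega⟩)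

theorem PT_lt {N : ℕ} [NeZero N] (hN : 3 ≤ N) {T : Triang N} {i j v x y : Vx N}
    (h : PT T i j v x y) : D v x < D v y := by
  obtain ⟨p1, p2, p3, p4, p5, p6, p7⟩ := h
  have := J_ne hN p3
  have h2 := D_coc v x y
  have h3 := D_lt x y
  omega

theorem PT_ne {N : ℕ} [NeZero N] (hN : 3 ≤ N) {T : Triang N} {i j v x y : Vx N}
    (h : PT T i j v x y) : v ≠ i ∧ v ≠ j := by
  obtain ⟨p1, p2, p3, p4, p5, p6, p7⟩ := h
  have := J_ne hN p1
  constructor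
  · rintro rfl
    rw [D_self] at p4
    omega
  · rintro rfl
    rw [D_self] at p5
    omega

def Tr {N : ℕ} (T : Triang N) (a b c : Vx N) : Prop :=
  Joined T a b ∧ Joined T b c ∧ Joined T a c ∧ D a b < D a c

theorem Tr_rot {N : ℕ} [NeZero N] (hN : 3 ≤ N) {T : Triang N} {a b c : Vx N} (h : Tr T a b c) :
    Tr T b c a := by
  obtain ⟨h1, h2, h3, h4⟩ := h
  have n1 := J_ne hN h1
  have n2 := J_ne hN h2
  have s0 := D_self a
  have s1 := D_coc a b c
  have s2 := D_coc a b a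
  have t1 := D_lt b c
  have t2 := D_lt a c
  exact ⟨h2, J_symm h3, J_symm h1, by omega⟩

theorem USide_iff {N : ℕ} [NeZero N] (hN : 3 ≤ N) (T : Triang N) (a b : Vx N)
    (h : D a b + 1 < N) (h0 : D a b ≠ 0) : USide T a (D a b) ↔ Joined T a b := by
  unfold USide
  rw [D_add, J_iff hN]
  have s2 := D_coc a b a
  have s0 := D_self a
  constructor
  · tauto
  · rintro (h | h | h)
    · exact Or.inl h
    · omega
    · exact Or.inr h

theorem UTri_mk {N : ℕ} [NeZero N] (hN : 3 ≤ N) {T : Triang N} {a b c : Vx N} (h : Tr T a b c)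
    (h1 : a.val < b.val) (h2 : a.val < c.val) : IsUTri T (a, D a b, D b c) ∧
      ∀ u, UInc u (a, D a b, D b c) ↔ u = a ∨ u = b ∨ u = c := by
  have h' := Tr_rot hN h
  obtain ⟨p1, p2, p3, p4⟩ := h
  obtain ⟨q1, q2, q3, q4⟩ := h'
  have n1 := J_ne hN p1
  have n2 := J_ne hN p2
  have n3 := J_ne hN q2
  have s0 := D_self a
  have s1 := D_coc a b c
  have s2 := D_coc a c a
  have t1 := D_lt a c
  have t2 := D_lt b c
  have t3 := D_lt c a
  have e : D a b + D b c = D a c := by omega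
  have e3 : N - D a b - D b c = D c a := by omega
  refine ⟨⟨?_, ?_, ?_, ?_, ?_, ?_, ?_, ?_⟩, ?_⟩
  · show 1 ≤ D a b
    omega
  · show 1 ≤ D b c
    omega
  · show D a b + D b c ≤ N - 1
    omega
  · exact (USide_iff hN T a b (by omega) n1).2 p1
  · simp only [D_add]
    exact (USide_iff hN T b c (by omega) n2).2 p2
  · simp only [e, D_add, e3]
    exact (USide_iff hN T c a (by omega) n3).2 q2
  · simp only [D_add]
    exact h1
  · simp only [e, D_add]
    exact h2
  · intro u
    simp only [UInc, e, D_add]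

theorem UTri_elim {N : ℕ} [NeZero N] (hN : 3 ≤ N) {T : Triang N} {t : Vx N × ℕ × ℕ}
    (h : IsUTri T t) : ∃ a b c, Tr T a b c ∧ a.val < b.val ∧ a.val < c.val ∧
      t = (a, D a b, D b c) := by
  obtain ⟨a, p, q⟩ := t
  obtain ⟨h1, h2, h3, h4, h5, h6, h7, h8⟩ := h
  simp only at h1 h2 h3 h4 h5 h6 h7 h8
  have hb := D_nat a p (by omega)
  have hc := D_nat a (p + q) (by omega)
  generalize a + (p : Vx N) = b at *
  generalize a + ((p + q : ℕ) : Vx N) = c at *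
  have s0 := D_self a
  have s1 := D_coc a b c
  have s2 := D_coc a c a
  have t1 := D_lt a c
  have t2 := D_lt b c
  have t3 := D_lt c a
  have e2 : q = D b c := by omega
  have e3 : N - p - q = D c a := by omega
  rw [e3] at h6
  subst e2
  subst hb
  refine ⟨a, b, c, ⟨?_, ?_, ?_, ?_⟩, h7, h8, rfl⟩
  · exact (USide_iff hN T a b (by omega) (by omega)).1 h4
  · exact (USide_iff hN T b c (by omega) (by omega)).1 h5
  · exact J_symm ((USide_iff hN T c a (by omega) (by omega)).1 h6)
  · omega

theorem Tr_canon {N : ℕ} [NeZero N] (hN : 3 ≤ N) {T : Triang N} {a b c : Vx N} (h : Tr T a b c) :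
    ∃ t, IsUTri T t ∧ ∀ u, UInc u t ↔ u = a ∨ u = b ∨ u = c := by
  have h' := Tr_rot hN h
  have h'' := Tr_rot hN h'
  have n1 : a.val ≠ b.val := fun e => J_ne hN h.1 (D_zero.2 (ZMod.val_injective N e).symm)
  have n2 : b.val ≠ c.val := fun e => J_ne hN h'.1 (D_zero.2 (ZMod.val_injective N e).symm)
  have n3 : c.val ≠ a.val := fun e => J_ne hN h''.1 (D_zero.2 (ZMod.val_injective N e).symm)
  by_cases c1 : a.val < b.val ∧ a.val < c.val
  · exact ⟨_, UTri_mk hN h c1.1 c1.2⟩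
  by_cases c2 : b.val < c.val ∧ b.val < a.val
  · obtain ⟨k1, k2⟩ := UTri_mk hN h' c2.1 c2.2
    exact ⟨_, k1, fun u => by rw [k2]; tauto⟩
  · obtain ⟨k1, k2⟩ := UTri_mk hN h'' (by omega) (by omega)
    exact ⟨_, k1, fun u => by rw [k2]; tauto⟩

theorem canon_inj {N : ℕ} [NeZero N] (hN : 3 ≤ N) {T : Triang N} {t t' : Vx N × ℕ × ℕ}
    (h : IsUTri T t) (h' : IsUTri T t') (hu : ∀ u, UInc u t → UInc u t')
    (hu' : ∀ u, UInc u t' → UInc u t) : t = t' := by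
  obtain ⟨a, b, c, k, l1, l2, rfl⟩ := UTri_elim hN h
  obtain ⟨a', b', c', k', l1', l2', rfl⟩ := UTri_elim hN h'
  have m := (UTri_mk hN k l1 l2).2
  have m' := (UTri_mk hN k' l1' l2').2
  simp only [m, m'] at hu hu'
  have ha := hu a (Or.inl rfl)
  have ha' := hu' a' (Or.inl rfl)
  have e : a = a' := by
    apply ZMod.val_injective N
    have ha1 : a'.val ≤ a.val := by
      rcases ha with h | h | h <;> rw [h] <;> omega
    have ha2 : a.val ≤ a'.val := by
      rcases ha' with h | h | h <;> rw [h] <;> omega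
    omega
  subst e
  have hb := hu b (by tauto)
  have hc := hu c (by tauto)
  have n1 := J_ne hN k.1
  have n2 := J_ne hN k.2.2.1
  have d := k.2.2.2
  have d' := k'.2.2.2
  have z := D_self a
  rcases hb with rfl | rfl | rfl <;> rcases hc with rfl | rfl | rfl <;> first | rfl | omega

theorem ex_main {N : ℕ} [NeZero N] (hN : 3 ≤ N) (T : Triang N) {i j : Vx N}
    (hij : Joined T i j) : nMatch T i j = 1 := by
  have H : ∀ v : (Finset.univ \ {i, j} : Finset (Vx N)), ∃ x y t, PT T i j v.1 x y ∧ IsUTri T t ∧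
      ∀ u, UInc u t ↔ u = v.1 ∨ u = x ∨ u = y := by
    rintro ⟨v, hv⟩
    simp only [Finset.mem_sdiff, Finset.mem_univ, true_and, Finset.mem_insert,
      Finset.mem_singleton, not_or] at hv
    obtain ⟨x, y, h⟩ := PT_exists hN T hij hv.1 hv.2
    obtain ⟨t, h1, h2⟩ := Tr_canon hN (⟨h.1, h.2.2.1, h.2.1, PT_lt hN h⟩ : Tr T v x y)
    exact ⟨x, y, t, h, h1, h2⟩
  choose X Y g hP hT hU using H
  have rank : ∀ v w, UInc w.1 (g v) → w = v ∨ D (X w) (Y w) < D (X v) (Y v) := by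
    intro v w h
    rw [hU] at h
    rcases h with h | h
    · exact Or.inl (Subtype.ext h)
    · exact Or.inr (PT_rank hN hij (PT_ne hN (hP w)).1 (PT_ne hN (hP w)).2 (hP v) (hP w) h)
  have inc : ∀ v, UInc v.1 (g v) := fun v => (hU v _).2 (Or.inl rfl)
  have ginj : Function.Injective g := by
    intro v w h
    have h1 := rank v w (h ▸ inc w)
    have h2 := rank w v (h ▸ inc v)
    rcases h1 with h1 | h1
    · exact h1.symm
    rcases h2 with h2 | h2
    · exact h2
    omega
  have gsurj : ∀ t, IsUTri T t → ∃ v, g v = t := by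
    intro t ht
    have key : ∀ v x y, PT T i j v x y → (∀ u, UInc u t ↔ u = v ∨ u = x ∨ u = y) →
        ∃ v, g v = t := by
      intro v x y hp hu
      have hne := PT_ne hN hp
      let v' : (Finset.univ \ {i, j} : Finset (Vx N)) := ⟨v, by simp [hne.1, hne.2]⟩
      have hx : X v' = x ∧ Y v' = y := by
        have hq : PT T i j v (X v') (Y v') := hP v'
        obtain ⟨p1, p2, p3, p4, p5, p6, p7⟩ := hp
        obtain ⟨q1, q2, q3, q4, q5, q6, q7⟩ := hq
        have a1 := J_ne hN p1
        have a2 := J_ne hN q1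
        have a3 := J_ne hN hij
        have a4 := D_coc v i j
        have a5 := D_lt i j
        -- shift the chord to the base v
        have nc : ∀ x y z, Joined T v z → Joined T x y → D v x ≠ 0 → D v x < D v z →
            D v z < D v y → False := fun x y z hz hxy b1 b2 b3 =>
          J_nc hN hz hxy (by omega) b2 b3
        constructor
        · apply D_inj (o := v)
          rcases lt_trichotomy (D v (X v')) (D v x) with h | h | h
          · exact (nc _ _ _ p1 q3 a2 h (by omega)).elim
          · exact h
          · exact (nc _ _ _ q1 p3 a1 h (by omega)).elim
        · apply D_inj (o := v)
          rcases lt_trichotomy (D v (Y v')) (D v y) with h | h | h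
          · exact (nc _ _ _ q2 p3 a1 (by omega) h).elim
          · exact h
          · exact (nc _ _ _ p2 q3 a2 (by omega) h).elim
      have hg := hU v'
      rw [hx.1, hx.2] at hg
      exact ⟨v', canon_inj hN (hT v') ht (fun u h => (hu u).2 ((hg u).1 h))
        (fun u h => (hg u).2 ((hu u).1 h))⟩
    obtain ⟨a, b, c, k, l1, l2, rfl⟩ := UTri_elim hN ht
    have m := (UTri_mk hN k l1 l2).2
    rcases PT_cover hN hij k.1 k.2.1 k.2.2.1 k.2.2.2 with h | h | h
    · exact key _ _ _ h m
    · exact key _ _ _ h (fun u => by rw [m]; tauto)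
    · exact key _ _ _ h (fun u => by rw [m]; tauto)
  unfold nMatch UMatch UMatchIn
  rw [Set.ncard_eq_one]
  refine ⟨g, ?_⟩
  ext f
  simp only [Set.mem_ofPred_eq, Set.mem_singleton_iff, Set.mem_univ, true_and]
  constructor
  · rintro ⟨finj, hf⟩
    choose s hs using fun v => gsurj (f v) (hf v).1
    have sinj : Function.Injective s := by
      intro v w h
      apply finj
      rw [← hs v, ← hs w, h]
    have ssurj : Function.Surjective s := Finite.surjective_of_injective sinj
    have main : ∀ n v, D (X v) (Y v) = n → f v = g v := by
      intro n
      induction n using Nat.strong_induction_on with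
      | _ n ih =>
        intro v hv
        obtain ⟨w, hw⟩ := ssurj v
        have h1 := hs w
        rw [hw] at h1
        have h2 := (hf w).2
        rw [← h1] at h2
        rcases rank v w h2 with h3 | h3
        · subst h3
          exact h1.symm
        · have h4 := ih _ (hv ▸ h3) w rfl
          rw [← h1] at h4
          have h5 := ginj h4
          subst h5
          exact h1.symm
    funext v
    exact main _ v rfl
  · rintro rfl
    exact ⟨ginj, fun v => ⟨hT v, inc v⟩⟩

/-- If `i` and `j` are joined by an arc of the triangulation `T`,
or are neighbours on the boundary (`j = i + 1`), then `n_{ij} = 1`. -/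
theorem matching_number_one_of_arc_or_adjacent (N : ℕ) (hN : 3 ≤ N) [NeZero N]
    (T : Triang N) (i j : Vx N) (h : MemD T i j ∨ j = i + 1) :
    nMatch T i j = 1 := by
  apply ex_main hN T
  rcases h with h | h
  · exact Or.inr (Or.inr h)
  · exact Or.inl h

end Frieze
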